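/- arXiv:2106.04487 — 5 statements merged into one kernel-verified Lean document; each statement's English description precedes it below -/
import Mathlib

section
/- For all nonnegative integers n and m with m + 1 ≥ 2n, one has Σ_{k=0}^{n} binom(m+1, k) = Σ_{k=0}^{n} binom(2k+1, k) · binom(m − 2k − 1, n − k). -/
/-!
For fixed `n`, both sides make sense for every integer value of `m` once the factor
`C(m - 2k - 1, n - k)` is read as the generalized binomial coefficient `Ring.choose` over `ℤ`.
With `M = m + 1`, Pascal's rule shows that both sides satisfy
`F (n + 1) (M + 1) = F (n + 1) M + F n M`, so it suffices to compare them at `M = 0`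
(`jensen_ring_choose`). There the left side is `1`. By negation of the upper index and
`C(2k+1, k) C(n+k+1, n-k) = C(n, k) C(n+k+1, n)`, the right side is
`∑ (-1)^(n-k) C(n, k) C(n+1+k, n)`, the `n`-th forward difference of `x ↦ C(x, n)`
at `n + 1`, which is also `1` (`jensen_base`).

When `2n ≤ m + 1`, the upper indices with `k < n` are nonnegative, and for `k = n` the lower index
is `0`, so the generalized coefficients are the natural-number ones.
-/

/-- Both sides equal `(2k+j+1)! / (k! (k+1)! j!)`. -/
lemma choose_mul_choose_aux (k j : ℕ) :
    (2 * k + 1).choose k * (2 * k + 1 + j).choose j =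
      (k + j).choose k * (k + 1 + (k + j)).choose (k + j) := by
  have h1 := Nat.add_choose_mul_factorial_mul_factorial (k + 1) k
  have h2 := Nat.add_choose_mul_factorial_mul_factorial (2 * k + 1) j
  have h3 := Nat.add_choose_mul_factorial_mul_factorial j k
  have h4 := Nat.add_choose_mul_factorial_mul_factorial (k + 1) (k + j)
  rw [show k + 1 + k = 2 * k + 1 by ring] at h1
  rw [show j + k = k + j by ring] at h3
  rw [show k + 1 + (k + j) = 2 * k + 1 + j by ring] at h4 ⊢
  have hpos : 0 < (k + 1).factorial * k.factorial * j.factorial := by positivity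
  apply Nat.eq_of_mul_eq_mul_right hpos
  calc _ = (2 * k + 1 + j).choose j *
          ((2 * k + 1).choose k * (k + 1).factorial * k.factorial) * j.factorial := by ring
    _ = (2 * k + 1 + j).choose (k + j) * (k + 1).factorial *
          ((k + j).choose k * j.factorial * k.factorial) := by rw [h1, h2, h3, h4]
    _ = _ := by ring

/-- The right side of the identity at `m = -1`. -/
lemma jensen_base (n : ℕ) :
    ∑ k ∈ Finset.range (n + 1),
      ((2 * k + 1).choose k : ℤ) * Ring.choose (-(2 * k + 2) : ℤ) (n - k) = 1 := by
  have hd := congrFun (fwdDiff_iter_choose 0 n) (n + 1)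
  rw [fwdDiff_iter_eq_sum_shift] at hd
  simp only [add_zero, Nat.choose_zero_right, Nat.cast_one] at hd
  rw [← hd]
  refine Finset.sum_congr rfl fun k hk => ?_
  obtain ⟨j, rfl⟩ := Nat.exists_eq_add_of_le (Finset.mem_range_succ_iff.mp hk)
  have hc := choose_mul_choose_aux k j
  have hup : ((2 * k + 2 : ℤ) + j - 1) = ((2 * k + 1 + j : ℕ) : ℤ) := by push_cast; ring
  rw [show k + j - k = j by omega, Ring.choose_neg, hup, Ring.choose_natCast,
    show k + j + 1 + k • 1 = k + 1 + (k + j) by simp; ring]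
  zify at hc
  simp only [Units.smul_def, smul_eq_mul, Int.negOnePow_def, zpow_natCast, Units.val_pow_eq_pow_val,
    Units.val_neg, Units.val_one]
  linear_combination (-1 : ℤ) ^ j * hc

/-- The identity for every upper index `M = m + 1`, with generalized binomial coefficients. -/
lemma jensen_ring_choose (M n : ℕ) :
    ∑ k ∈ Finset.range (n + 1), (M.choose k : ℤ) =
      ∑ k ∈ Finset.range (n + 1),
        ((2 * k + 1).choose k : ℤ) * Ring.choose ((M : ℤ) - (2 * k + 2)) (n - k) := by
  induction M generalizing n with
  | zero =>
    simp only [Nat.cast_zero, zero_sub]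
    rw [jensen_base, Finset.sum_range_succ']
    simp
  | succ M ih =>
    cases n with
    | zero => simp
    | succ n =>
      have hL : ∑ k ∈ Finset.range (n + 1 + 1), ((M + 1).choose k : ℤ) =
          ∑ k ∈ Finset.range (n + 1 + 1), (M.choose k : ℤ) +
            ∑ k ∈ Finset.range (n + 1), (M.choose k : ℤ) := by
        rw [Finset.sum_range_succ', Finset.sum_range_succ' _ (n + 1)]
        simp only [Nat.choose_succ_succ', Nat.cast_add, Finset.sum_add_distrib,
          Nat.choose_zero_right]
        ring
      rw [hL, ih (n + 1), ih n, Finset.sum_range_succ _ (n + 1),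
        Finset.sum_range_succ _ (n + 1), add_right_comm, ← Finset.sum_add_distrib]
      congr 1
      · refine Finset.sum_congr rfl fun k hk => ?_
        have hk := Finset.mem_range_succ_iff.mp hk
        rw [show n + 1 - k = n - k + 1 by omega,
          show ((M + 1 : ℕ) : ℤ) - (2 * k + 2) = (M - (2 * k + 2)) + 1 by push_cast; ring,
          Ring.choose_succ_succ]
        ring
      · simp

/-- **Jensen-type binomial identity** (paper's Lemma 3):
for nonnegative integers `n, m` with `m + 1 ≥ 2n`,
`∑_{k=0}^{n} C(m+1, k) = ∑_{k=0}^{n} C(2k+1, k) · C(m − 2k − 1, n − k)`. -/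
theorem jensen_binomial_identity (n m : ℕ) (h : 2 * n ≤ m + 1) :
    ∑ k ∈ Finset.range (n + 1), Nat.choose (m + 1) k =
      ∑ k ∈ Finset.range (n + 1),
        Nat.choose (2 * k + 1) k * Nat.choose (m - (2 * k + 1)) (n - k) := by
  zify
  rw [jensen_ring_choose]
  refine Finset.sum_congr rfl fun k hk => ?_
  rcases (Finset.mem_range_succ_iff.mp hk).eq_or_lt with rfl | hlt
  · simp
  · rw [show ((m + 1 : ℕ) : ℤ) - (2 * k + 2) = ((m - (2 * k + 1) : ℕ) : ℤ) by omega,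
      Ring.choose_natCast]
end

section
/- For all nonnegative integers n and m with n ≤ m, one has Σ_{k=0}^{n} binom(m+1, k) = Σ_{k=0}^{n} 2^k · binom(m − k, n − k). -/
/-! Both sides `S(n, m)` equal `1` at `n = 0` and satisfy
`S(n + 1, m + 1) = C(m + 1, n + 1) + 2 * S(n, m)`. For the partial row sums on the left this is
Pascal's rule (`sum_choose_succ_row`); on the right it is splitting off the term `k = 0`.
The identity follows by induction along the diagonals `m - n = const`. -/

/-- Pascal's rule summed over an initial segment of row `a + 1`. -/
theorem sum_choose_succ_row (a n : ℕ) :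
    ∑ k ∈ Finset.range (n + 2), Nat.choose (a + 1) k =
      Nat.choose a (n + 1) + 2 * ∑ k ∈ Finset.range (n + 1), Nat.choose a k := by
  have h : ∑ k ∈ Finset.range (n + 2), Nat.choose a k =
      ∑ k ∈ Finset.range (n + 1), Nat.choose a (k + 1) + 1 := by
    rw [Finset.sum_range_succ', Nat.choose_zero_right]
  rw [Finset.sum_range_succ] at h
  rw [Finset.sum_range_succ', Nat.choose_zero_right]
  simp only [Nat.choose_succ_succ', Finset.sum_add_distrib]
  omega

/-- Identity from the proof of the paper's Lemma 3 (Bernoulli's triangle):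
for nonnegative integers `n ≤ m`,
`∑_{k=0}^{n} C(m+1, k) = ∑_{k=0}^{n} 2^k · C(m − k, n − k)`. -/
theorem bernoulli_triangle_identity (n m : ℕ) (h : n ≤ m) :
    ∑ k ∈ Finset.range (n + 1), Nat.choose (m + 1) k =
      ∑ k ∈ Finset.range (n + 1), 2 ^ k * Nat.choose (m - k) (n - k) := by
  induction n generalizing m with
  | zero => simp
  | succ n ih =>
    obtain ⟨m, rfl⟩ : ∃ m', m = m' + 1 := ⟨m - 1, by omega⟩
    rw [sum_choose_succ_row, ih m (by omega), Finset.sum_range_succ' _ (n + 1), Finset.mul_sum]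
    simp only [Nat.add_sub_add_right, pow_succ', mul_assoc, pow_zero, one_mul, Nat.sub_zero]
    rw [add_comm]
end

section
/- Let r > 0 and let K : ℝ → ℝ be infinitely differentiable on an open interval containing r. Then for every integer n ≥ 1, the n-th derivative at ε = 0 of the function ε ↦ K(r·√(1+ε)) equals Σ_{m=1}^{n} (−1)^{n+m} · ((2n−2m−1)!! / 2^n) · binom(2n−m−1, m−1) · K^{(m)}(r) · r^m, where K^{(m)} denotes the m-th derivative of K. -/
/-!
Put `s = √(1 + x)`, so that `s² = 1 + x` and `s' = 1 / (2 s)`. By induction on `n`, near `x = 0`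

`dⁿ/dxⁿ K(r s) = ∑_{m ≤ n} A(n, m) · K⁽ᵐ⁾(r s) · rᵐ · sᵐ / (1 + x)ⁿ`,

because differentiating one summand gives `1/2` times the summand of index `(n + 1, m + 1)` plus
`(m - 2n)/2` times that of index `(n + 1, m)`. The coefficients are thus determined by
`A(n + 1, m) = A(n, m - 1)/2 + ((m - 2n)/2) A(n, m)` (`sqrtCoeff`, `iteratedDeriv_comp_sqrt`).
This recursion is solved by
`A(m + 1 + k, m + 1) = (-1)ᵏ (m + 2k)! / (m! k! 2^(m + 1 + 2k))` (`sqrtCoeff_eq`), and the identity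
`(2k - 1)!! · 2ᵏ k! = (2k)!` turns this into the double factorial times a binomial coefficient.
Setting `x = 0` finishes the proof.
-/

/-- The coefficient of `K⁽ᵐ⁾(r s) rᵐ sᵐ / (1 + x)ⁿ`, where `s = √(1 + x)`, in the `n`-th derivative
of `K(r s)` with respect to `x`, given by the recursion that differentiation imposes. -/
noncomputable def sqrtCoeff : ℕ → ℕ → ℝ
  | 0, 0 => 1
  | 0, _ + 1 => 0
  | n + 1, 0 => -n * sqrtCoeff n 0
  | n + 1, m + 1 => sqrtCoeff n m / 2 + ((m + 1 : ℝ) - 2 * n) / 2 * sqrtCoeff n (m + 1)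

lemma sqrtCoeff_of_lt (n : ℕ) : ∀ m, n < m → sqrtCoeff n m = 0 := by
  induction n with
  | zero =>
    intro m hm
    obtain ⟨m, rfl⟩ := Nat.exists_eq_succ_of_ne_zero hm.ne'
    rfl
  | succ n ih =>
    intro m hm
    obtain ⟨m, rfl⟩ := Nat.exists_eq_succ_of_ne_zero (Nat.ne_zero_of_lt hm)
    simp [sqrtCoeff, ih m (by omega), ih (m + 1) (by omega)]

lemma sqrtCoeff_succ_zero (n : ℕ) : sqrtCoeff (n + 1) 0 = 0 := by
  induction n with
  | zero => simp [sqrtCoeff]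
  | succ n ih => rw [sqrtCoeff, ih, mul_zero]

lemma sqrtCoeff_eq (N : ℕ) : ∀ m k, m + k = N → sqrtCoeff (N + 1) (m + 1) =
    (-1) ^ k * (m + 2 * k).factorial / (m.factorial * k.factorial * 2 ^ (m + 1 + 2 * k)) := by
  induction N with
  | zero =>
    intro m k h
    obtain ⟨rfl, rfl⟩ : m = 0 ∧ k = 0 := by omega
    simp [sqrtCoeff]
  | succ N ih =>
    intro m k h
    rw [sqrtCoeff]
    rcases m with _ | m <;> rcases k with _ | k
    · omega
    · obtain rfl : k = N := by omega
      rw [sqrtCoeff_succ_zero, ih 0 k (by omega)]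
      have h1 : 0 + 2 * (k + 1) = 2 * k + 1 + 1 := by ring
      rw [h1, Nat.factorial_succ (2 * k + 1), Nat.factorial_succ (2 * k), Nat.factorial_succ k]
      have := Nat.factorial_ne_zero k
      push_cast
      field_simp
      simp
      ring
    · obtain rfl : m = N := by omega
      rw [ih m 0 (by omega), sqrtCoeff_of_lt _ _ (by omega)]
      have := Nat.factorial_ne_zero m
      have := Nat.factorial_ne_zero (m + 1)
      simp
      field_simp
      ring
    · obtain rfl : N = m + k + 1 := by omega
      rw [ih m (k + 1) (by omega), ih (m + 1) k (by omega)]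
      have h1 : m + 1 + 2 * (k + 1) = m + 2 * k + 1 + 1 + 1 := by ring
      have h2 : m + 2 * (k + 1) = m + 2 * k + 1 + 1 := by ring
      have h3 : m + 1 + 2 * k = m + 2 * k + 1 := by ring
      rw [h1, h2, h3, Nat.factorial_succ (m + 2 * k + 1 + 1), Nat.factorial_succ (m + 2 * k + 1),
        Nat.factorial_succ k, Nat.factorial_succ m]
      have := Nat.factorial_ne_zero k
      have := Nat.factorial_ne_zero m
      push_cast
      field_simp
      ring

lemma sqrtCoeff_eq_doubleFactorial (n m : ℕ) (hm : 1 ≤ m) (hmn : m ≤ n) :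
    sqrtCoeff n m = (-1 : ℝ) ^ (n + m) * ((2 * n - 2 * m - 1).doubleFactorial : ℝ) / 2 ^ n *
          (Nat.choose (2 * n - m - 1) (m - 1) : ℝ) := by
  obtain ⟨m, rfl⟩ := Nat.exists_eq_add_of_le' hm
  obtain ⟨k, rfl⟩ := Nat.exists_eq_add_of_le hmn
  rw [show m + 1 + k = m + k + 1 by ring, sqrtCoeff_eq (m + k) m k rfl]
  have e1 : 2 * (m + k + 1) - 2 * (m + 1) - 1 = 2 * k - 1 := by omega
  have e2 : 2 * (m + k + 1) - (m + 1) - 1 = m + 2 * k := by omega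
  have e3 : (-1 : ℝ) ^ (m + k + 1 + (m + 1)) = (-1) ^ k := by
    rw [show m + k + 1 + (m + 1) = 2 * (m + 1) + k by ring, pow_add, pow_mul]
    simp
  have hdf : (2 * k - 1).doubleFactorial * (2 ^ k * k.factorial) = (2 * k).factorial := by
    rw [← Nat.doubleFactorial_two_mul]
    rcases k with _ | k
    · simp
    · rw [show 2 * (k + 1) = 2 * k + 1 + 1 by ring, Nat.factorial_eq_mul_doubleFactorial, mul_comm]
      rfl
  have hch := Nat.add_choose_mul_factorial_mul_factorial m (2 * k)
  rw [← Nat.choose_symm_add] at hch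
  rw [e1, e2, e3, Nat.add_sub_cancel, ← hch, ← hdf]
  have := Nat.factorial_ne_zero k
  have := Nat.factorial_ne_zero m
  push_cast
  field_simp
  ring

lemma hasDerivAt_iteratedDeriv_of_contDiffOn {K : ℝ → ℝ} {a b : ℝ}
    (hK : ContDiffOn ℝ (⊤ : ℕ∞) K (Set.Ioo a b)) (m : ℕ) {y : ℝ} (hy : y ∈ Set.Ioo a b) :
    HasDerivAt (iteratedDeriv m K) (iteratedDeriv (m + 1) K y) y := by
  have h := (hK.differentiableOn_iteratedDerivWithin (m := m)
    (by exact_mod_cast ENat.natCast_lt_top m) isOpen_Ioo.uniqueDiffOn).congr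
    fun z hz => (iteratedDerivWithin_of_isOpen isOpen_Ioo hz).symm
  rw [iteratedDeriv_succ]
  exact (h.differentiableAt (isOpen_Ioo.mem_nhds hy)).hasDerivAt

/-- Differentiating a single summand: `K⁽ᵐ⁾(r s) rᵐ sᵐ / (1 + x)ⁿ` yields contributions to the
summands of index `(n + 1, m + 1)` and `(n + 1, m)`. -/
lemma hasDerivAt_summand {K : ℝ → ℝ} {a b : ℝ} (r : ℝ)
    (hK : ContDiffOn ℝ (⊤ : ℕ∞) K (Set.Ioo a b)) (n m : ℕ) {x : ℝ} (hx : -1 < x)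
    (hy : r * √(1 + x) ∈ Set.Ioo a b) :
    HasDerivAt (fun x => iteratedDeriv m K (r * √(1 + x)) * r ^ m * √(1 + x) ^ m / (1 + x) ^ n)
      (1 / 2 * (iteratedDeriv (m + 1) K (r * √(1 + x)) * r ^ (m + 1) * √(1 + x) ^ (m + 1)
          / (1 + x) ^ (n + 1)) +
        (m - 2 * n) / 2 * (iteratedDeriv m K (r * √(1 + x)) * r ^ m * √(1 + x) ^ m
          / (1 + x) ^ (n + 1))) x := by
  have hx0 : 0 < 1 + x := by linarith
  have hlin : HasDerivAt (fun x : ℝ => 1 + x) 1 x := (hasDerivAt_id x).const_add 1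
  have hs : HasDerivAt (fun x : ℝ => √(1 + x)) (1 / (2 * √(1 + x))) x := hlin.sqrt hx0.ne'
  have hKm := (hasDerivAt_iteratedDeriv_of_contDiffOn hK m hy).comp x (hs.const_mul r)
  have H := ((hKm.mul_const (r ^ m)).mul (hs.pow m)).div (hlin.pow n) (pow_pos hx0 n).ne'
  refine H.congr_deriv ?_
  have hs0 : 0 < √(1 + x) := Real.sqrt_pos.2 hx0
  have hsq : 1 + x = √(1 + x) ^ 2 := (Real.sq_sqrt hx0.le).symm
  simp only [Function.comp_apply, Pi.mul_apply, Pi.pow_apply]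
  generalize √(1 + x) = s at *
  rw [hsq]
  rcases m with _ | m <;> rcases n with _ | n <;> simp <;> field_simp <;> ring

lemma iteratedDeriv_comp_sqrt {K : ℝ → ℝ} {a b : ℝ} (r : ℝ)
    (hK : ContDiffOn ℝ (⊤ : ℕ∞) K (Set.Ioo a b)) (n : ℕ) :
    ∀ x : ℝ, -1 < x → r * √(1 + x) ∈ Set.Ioo a b →
      iteratedDeriv n (fun x => K (r * √(1 + x))) x = ∑ m ∈ Finset.range (n + 1), sqrtCoeff n m *
        (iteratedDeriv m K (r * √(1 + x)) * r ^ m * √(1 + x) ^ m / (1 + x) ^ n) := by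
  induction n with
  | zero => intro x _ _; simp [sqrtCoeff]
  | succ n ih =>
    intro x hx hy
    have hcont : Continuous fun x : ℝ => r * √(1 + x) := by fun_prop
    have hev : ∀ᶠ z in nhds x, -1 < z ∧ r * √(1 + z) ∈ Set.Ioo a b :=
      (lt_mem_nhds hx).and (hcont.continuousAt.eventually_mem (isOpen_Ioo.mem_nhds hy))
    have heq := hev.mono fun z hz => ih z hz.1 hz.2
    rw [iteratedDeriv_succ, Filter.EventuallyEq.deriv_eq heq]
    have H := HasDerivAt.fun_sum (u := Finset.range (n + 1)) fun m _ =>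
      (hasDerivAt_summand r hK n m hx hy).const_mul (sqrtCoeff n m)
    rw [H.deriv]
    generalize hT : (fun m => iteratedDeriv m K (r * √(1 + x)) * r ^ m * √(1 + x) ^ m
      / (1 + x) ^ (n + 1)) = T
    have hTm := fun m => congrFun hT m
    simp only [hTm]
    -- The terms with `T m` may be summed up to `m = n + 1`, since `sqrtCoeff n (n + 1) = 0`; after
    -- splitting off `m = 0` on both sides, the summands match by the recursion for `sqrtCoeff`.
    have h0 : ∑ m ∈ Finset.range (n + 1), sqrtCoeff n m * ((m - 2 * n) / 2 * T m) =
        ∑ m ∈ Finset.range (n + 2), sqrtCoeff n m * ((m - 2 * n) / 2 * T m) := by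
      rw [Finset.sum_range_succ _ (n + 1), sqrtCoeff_of_lt n (n + 1) (by omega)]
      simp
    simp only [mul_add, Finset.sum_add_distrib]
    rw [h0, Finset.sum_range_succ' _ (n + 1), Finset.sum_range_succ' _ (n + 1), ← add_assoc,
      ← Finset.sum_add_distrib]
    congr 1
    · refine Finset.sum_congr rfl fun m _ => ?_
      rw [sqrtCoeff]
      push_cast
      ring
    · rw [sqrtCoeff]
      push_cast
      ring

/-- **Paper's Lemma 4**: if `K` is infinitely differentiable on an open interval
containing `r > 0`, then for `n ≥ 1` the `n`-th derivative at `ε = 0` of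
`ε ↦ K(r·√(1+ε))` equals
`∑_{m=1}^{n} (−1)^{n+m} ((2n−2m−1)!! / 2^n) C(2n−m−1, m−1) K⁽ᵐ⁾(r) rᵐ`. -/
theorem faa_di_bruno_sqrt_composition (r : ℝ) (hr : 0 < r) (K : ℝ → ℝ)
    (a b : ℝ) (ha : a < r) (hb : r < b)
    (hK : ContDiffOn ℝ (⊤ : ℕ∞) K (Set.Ioo a b)) (n : ℕ) (hn : 1 ≤ n) :
    iteratedDeriv n (fun ε : ℝ => K (r * Real.sqrt (1 + ε))) 0 =
      ∑ m ∈ Finset.Icc 1 n,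
        (-1 : ℝ) ^ (n + m) * ((2 * n - 2 * m - 1).doubleFactorial : ℝ) / 2 ^ n *
          (Nat.choose (2 * n - m - 1) (m - 1) : ℝ) * iteratedDeriv m K r * r ^ m := by
  have h := iteratedDeriv_comp_sqrt r hK n 0 (by norm_num) (by simpa using ⟨ha, hb⟩)
  rw [h, Finset.range_eq_Ico, Finset.sum_eq_sum_Ico_succ_bot (by omega)]
  obtain ⟨n, rfl⟩ := Nat.exists_eq_add_of_le' hn
  rw [sqrtCoeff_succ_zero, zero_mul, zero_add]
  refine Finset.sum_congr (by ext; simp) fun m hm => ?_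
  rw [Finset.mem_Icc] at hm
  rw [← sqrtCoeff_eq_doubleFactorial (n + 1) m hm.1 hm.2]
  simp
  ring
end

section
/- Fix a real number r and define g_i = (−1)^{i+1} · ((2i−3)!! / 2^i) · r for integers i ≥ 1, with the convention (−1)!! = 1. Suppose B : ℕ × ℕ → ℝ satisfies B(0,0) = 1, B(n,0) = 0 for all n ≥ 1, B(0,m) = 0 for all m ≥ 1, and B(n,m) = Σ_{i=1}^{n−m+1} binom(n−1, i−1) · g_i · B(n−i, m−1) for all integers n ≥ m ≥ 1. Then for all integers n ≥ m ≥ 1, B(n,m) = (−1)^{n+m} · r^m · (2n−m−1)! / ((m−1)! · (n−m)! · 2^{2n−m}). -/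
/-!
Since `(2j-1)‼ = (2j)! / (2^j j!)`, the sequence is `g_{j+1} = (-1)^j r (2j)! / (2^(2j+1) j!)`.
Put `n = M + k` and `m = M`. Up to explicit factors, the closed form is the ballot number
`T_M(k) = M / (M + 2k) * C(M + 2k, k)`, the coefficient of `x^k` in `c(x)^M`, where `c` is the
Catalan generating function. The Bell recurrence then amounts to the convolution identity
`∑_{j+i=k} C(2j, j) T_M(i) = C(M + 2k, k)`, i.e. to the expansion of `c(x)^M / √(1 - 4x)`.

The identity (`sum_centralBinom_mul_ballot`) is proved without power series: both sides satisfy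
`u_{M+1}(k+1) = u_M(k+1) + u_{M+2}(k)` (Pascal's rule on the right, `ballot_succ_succ` on the
left), and they agree for `k = 0` and for `M = 0`. The normalization `T_0(0) = 1` lets the
induction on `M` for the Bell numbers start from the given column `B(·, 0)`.
-/

/-- The ballot number `M / (M + 2i) * C(M + 2i, i)`, written with factorials, with value `1` at
`i = 0` for every `M` (including `M = 0`, where the quotient would be `0 / 0`). -/
noncomputable def ballot (M : ℕ) : ℕ → ℝ
  | 0 => 1
  | i + 1 => M * (M + 2 * i + 1).factorial / ((i + 1).factorial * (M + i + 1).factorial)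

/-- For positive first index the factorial formula also covers `i = 0`. -/
lemma ballot_succ (M i : ℕ) :
    ballot (M + 1) i =
      (M + 1) * (M + 2 * i).factorial / (i.factorial * (M + i + 1).factorial) := by
  cases i with
  | zero =>
    have h : (M.factorial : ℝ) ≠ 0 := by positivity
    simp only [ballot, Nat.mul_zero, Nat.add_zero, Nat.factorial_zero, Nat.factorial_succ]
    push_cast
    field_simp
  | succ i =>
    simp only [ballot]
    rw [show M + 1 + 2 * i + 1 = M + 2 * (i + 1) by ring,
      show M + 1 + i + 1 = M + (i + 1) + 1 by ring]
    push_cast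
    rfl

lemma ballot_succ_succ (M i : ℕ) :
    ballot (M + 1) (i + 1) = ballot M (i + 1) + ballot (M + 2) i := by
  rw [ballot_succ, ballot_succ (M + 1) i]
  simp only [ballot]
  rw [show M + 2 * (i + 1) = (M + 2 * i + 1) + 1 by ring,
    show M + (i + 1) + 1 = (M + i + 1) + 1 by ring, show M + 1 + 2 * i = M + 2 * i + 1 by ring,
    show M + 1 + i + 1 = (M + i + 1) + 1 by ring,
    Nat.factorial_succ (M + 2 * i + 1), Nat.factorial_succ (M + i + 1), Nat.factorial_succ i]
  have h1 : (i.factorial : ℝ) ≠ 0 := by positivity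
  have h2 : ((M + i + 1).factorial : ℝ) ≠ 0 := by positivity
  have h3 : (M : ℝ) + i + 1 + 1 ≠ 0 := by positivity
  push_cast
  field_simp
  ring

/-- The convolution identity `c(x)^M / √(1 - 4x) = ∑ C(M + 2k, k) x^k`, coefficientwise. -/
lemma sum_centralBinom_mul_ballot (k M : ℕ) :
    ∑ p ∈ Finset.HasAntidiagonal.antidiagonal k, (Nat.centralBinom p.1 : ℝ) * ballot M p.2 =
      (M + 2 * k).choose k := by
  induction k generalizing M with
  | zero => simp [ballot]
  | succ k ihk =>
    induction M with
    | zero =>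
      rw [Finset.Nat.sum_antidiagonal_succ']
      simp [ballot, Nat.centralBinom]
    | succ M ihM =>
      have key := ihk (M + 2)
      rw [Finset.Nat.sum_antidiagonal_succ'] at ihM ⊢
      have hp : (M + 1 + 2 * (k + 1)).choose (k + 1) =
          (M + 2 + 2 * k).choose k + (M + 2 * (k + 1)).choose (k + 1) := by
        rw [show M + 1 + 2 * (k + 1) = (M + 2 + 2 * k) + 1 by ring, Nat.choose_succ_succ,
          show M + 2 * (k + 1) = M + 2 + 2 * k by ring]
      rw [hp, Nat.cast_add, ← ihM, ← key]
      simp only [ballot_succ_succ, mul_add, Finset.sum_add_distrib]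
      rw [show ballot (M + 1) 0 = ballot M 0 from rfl]
      ring

/-- `j! C(2j, j) = 2^j (2j-1)‼`; truncated subtraction gives `0‼ = 1` at `j = 0`, in agreement
with the convention `(-1)‼ = 1`. -/
lemma centralBinom_mul_factorial (j : ℕ) :
    Nat.centralBinom j * j.factorial = 2 ^ j * (2 * j - 1).doubleFactorial := by
  induction j with
  | zero => simp
  | succ j ih =>
    have hd : (2 * (j + 1) - 1).doubleFactorial = (2 * j + 1) * (2 * j - 1).doubleFactorial := by
      cases j with
      | zero => simp
      | succ j => exact Nat.doubleFactorial_add_two (2 * j + 1)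
    calc Nat.centralBinom (j + 1) * (j + 1).factorial
        = ((j + 1) * Nat.centralBinom (j + 1)) * j.factorial := by
          rw [Nat.factorial_succ]; ring
      _ = 2 * (2 * j + 1) * (Nat.centralBinom j * j.factorial) := by
          rw [Nat.succ_mul_centralBinom_succ]; ring
      _ = _ := by rw [ih, hd]; ring


/-- Closed-form evaluation of the partial Bell polynomials at the sequence
`g_i = (−1)^{i+1} ((2i−3)!!/2^i) r` (the inductive core of the paper's Lemma 4):
if `B` satisfies the Bell-polynomial recurrence for this sequence, then for
`n ≥ m ≥ 1`, `B(n,m) = (−1)^{n+m} r^m (2n−m−1)! / ((m−1)! (n−m)! 2^{2n−m})`. -/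
theorem bell_polynomial_closed_form (r : ℝ) (B : ℕ × ℕ → ℝ)
    (h00 : B (0, 0) = 1)
    (hn0 : ∀ n : ℕ, 1 ≤ n → B (n, 0) = 0)
    (h0m : ∀ m : ℕ, 1 ≤ m → B (0, m) = 0)
    (hrec : ∀ n m : ℕ, 1 ≤ m → m ≤ n →
      B (n, m) = ∑ i ∈ Finset.Icc 1 (n - m + 1),
        (Nat.choose (n - 1) (i - 1) : ℝ) *
          ((-1 : ℝ) ^ (i + 1) * ((2 * i - 3).doubleFactorial : ℝ) / 2 ^ i * r) *
          B (n - i, m - 1)) :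
    ∀ n m : ℕ, 1 ≤ m → m ≤ n →
      B (n, m) = (-1 : ℝ) ^ (n + m) * r ^ m * (Nat.factorial (2 * n - m - 1) : ℝ) /
        ((Nat.factorial (m - 1) : ℝ) * (Nat.factorial (n - m) : ℝ) * 2 ^ (2 * n - m)) := by
  -- The closed form in the variables `M = m`, `k = n - m`, valid from the column `M = 0` on.
  have main : ∀ M k : ℕ, B (M + k, M) =
      (-1 : ℝ) ^ k * r ^ M * (M + k).factorial / (M.factorial * 2 ^ (M + 2 * k)) *
        ballot M k := by
    intro M
    induction M with
    | zero =>
      intro k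
      cases k with
      | zero => simp [h00, ballot]
      | succ k => simp [hn0 (k + 1) (by omega), ballot]
    | succ M ih =>
      intro k
      rw [hrec (M + 1 + k) (M + 1) (by omega) (by omega)]
      have hterm : ∀ p ∈ Finset.HasAntidiagonal.antidiagonal k,
          (Nat.choose (M + k) p.1 : ℝ) *
            ((-1 : ℝ) ^ (p.1 + 1 + 1) *
              ((2 * p.1 - 1).doubleFactorial : ℝ) / 2 ^ (p.1 + 1) * r) * B (M + p.2, M) =
          (-1 : ℝ) ^ k * r ^ (M + 1) * (M + k).factorial /
            (M.factorial * 2 ^ (M + 1 + 2 * k)) *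
              ((Nat.centralBinom p.1 : ℝ) * ballot M p.2) := by
        rintro ⟨j, i⟩ hp
        obtain rfl : j + i = k := by simpa using hp
        have hd : (Nat.centralBinom j : ℝ) * j.factorial
            = 2 ^ j * ((2 * j - 1).doubleFactorial : ℝ) := by
          exact_mod_cast centralBinom_mul_factorial j
        have hd' : ((2 * j - 1).doubleFactorial : ℝ) =
            (Nat.centralBinom j : ℝ) * j.factorial / 2 ^ j := by
          rw [hd]; field_simp
        have hc : (Nat.choose (M + (j + i)) j : ℝ) =
            (M + (j + i)).factorial / (j.factorial * (M + i).factorial) := by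
          rw [Nat.cast_choose ℝ (by omega), show M + (j + i) - j = M + i by omega]
        have h1 : (j.factorial : ℝ) ≠ 0 := by positivity
        have h2 : ((M + i).factorial : ℝ) ≠ 0 := by positivity
        have h3 : (M.factorial : ℝ) ≠ 0 := by positivity
        simp only [ih i, hd', hc]
        rw [show M + 1 + 2 * (j + i) = M + 2 * i + (j + 1) + j by ring]
        simp only [pow_add _ _ (j + 1), pow_add _ _ j, pow_add _ j i, pow_succ]
        field_simp
      have hsum : ∑ i ∈ Finset.Icc 1 (M + 1 + k - (M + 1) + 1),
          (Nat.choose (M + 1 + k - 1) (i - 1) : ℝ) *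
            ((-1 : ℝ) ^ (i + 1) * ((2 * i - 3).doubleFactorial : ℝ) / 2 ^ i * r) *
            B (M + 1 + k - i, M + 1 - 1) =
          ∑ p ∈ Finset.HasAntidiagonal.antidiagonal k, (Nat.choose (M + k) p.1 : ℝ) *
            ((-1 : ℝ) ^ (p.1 + 1 + 1) *
              ((2 * p.1 - 1).doubleFactorial : ℝ) / 2 ^ (p.1 + 1) * r) * B (M + p.2, M) := by
        symm
        refine Finset.sum_bij (fun p _ => p.1 + 1) ?_ ?_ ?_ ?_
        · rintro ⟨j, i⟩ hp
          simp only [Finset.HasAntidiagonal.mem_antidiagonal] at hp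
          simp only [Finset.mem_Icc]
          omega
        · rintro ⟨j, i⟩ hp ⟨j', i'⟩ hp' h
          simp only [Finset.HasAntidiagonal.mem_antidiagonal] at hp hp' h
          simp only [Prod.mk.injEq]
          omega
        · intro b hb
          simp only [Finset.mem_Icc] at hb
          exact ⟨(b - 1, k + 1 - b), by simp only [Finset.HasAntidiagonal.mem_antidiagonal]; omega,
            by simp only; omega⟩
        · rintro ⟨j, i⟩ hp
          simp only [Finset.HasAntidiagonal.mem_antidiagonal] at hp
          simp only
          rw [show M + 1 + k - 1 = M + k by omega, show j + 1 - 1 = j by omega,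
            show 2 * (j + 1) - 3 = 2 * j - 1 by omega,
            show M + 1 + k - (j + 1) = M + i by omega, show M + 1 - 1 = M by omega]
      rw [hsum, Finset.sum_congr rfl hterm, ← Finset.mul_sum, sum_centralBinom_mul_ballot,
        ballot_succ, Nat.cast_choose ℝ (by omega), show M + 2 * k - k = M + k by omega,
        show M + 1 + k = M + k + 1 by ring, Nat.factorial_succ M]
      have h1 : (k.factorial : ℝ) ≠ 0 := by positivity
      have h2 : ((M + k).factorial : ℝ) ≠ 0 := by positivity
      have h3 : (M.factorial : ℝ) ≠ 0 := by positivity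
      have h4 : ((M + k + 1).factorial : ℝ) ≠ 0 := by positivity
      push_cast
      field_simp
  intro n m hm hmn
  obtain ⟨M, rfl⟩ : ∃ M, m = M + 1 := ⟨m - 1, by omega⟩
  obtain ⟨k, rfl⟩ : ∃ k, n = M + 1 + k := ⟨n - (M + 1), by omega⟩
  have hsign : (-1 : ℝ) ^ (M + 1 + k + (M + 1)) = (-1) ^ k := by
    rw [show M + 1 + k + (M + 1) = 2 * (M + 1) + k by ring, pow_add, pow_mul]
    simp
  rw [main, ballot_succ, hsign, show 2 * (M + 1 + k) - (M + 1) - 1 = M + 2 * k by omega,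
    show M + 1 - 1 = M by omega, show M + 1 + k - (M + 1) = k by omega,
    show 2 * (M + 1 + k) - (M + 1) = M + 1 + 2 * k by omega,
    show M + 1 + k = M + k + 1 by ring, Nat.factorial_succ M]
  have h1 : (k.factorial : ℝ) ≠ 0 := by positivity
  have h3 : (M.factorial : ℝ) ≠ 0 := by positivity
  have h4 : ((M + k + 1).factorial : ℝ) ≠ 0 := by positivity
  push_cast
  field_simp
end

section
/- For all integers d ≥ 3 and P ≥ 0, one has Σ_{k=0}^{P} ( binom(k+d−1, k) − binom(k+d−3, d−1) ) · ( ⌊(P−k)/2⌋ + 1 ) = binom(d+P, P). -/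
/-!
Write `h k = C(k+d-1, k) - C(k+d-3, d-1)` for the summand without its radial factor, and `S P` for
the left-hand side. Raising `P` by two raises every radial factor `⌊(P-k)/2⌋ + 1` by one and adds
two new terms with factor one, so `S (P+2) - S P = ∑_{k ≤ P+2} h k`. This sum telescopes, since
`h` is a difference of the same sequence at `k` and `k - 2`, leaving
`C(P+1+d, d-1) + C(P+d, d-1)` (`sum_harmonics`). By Pascal's rule applied twice that is also
`C(d+P+2, d) - C(d+P, d)`, and a two-step induction on `P` concludes.
-/

/-- The number of independent hyperspherical harmonics of order at most `n + 1` in dimension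
`f + 3`. -/
lemma sum_harmonics (f n : ℕ) :
    ∑ k ∈ Finset.range (n + 2),
      ((Nat.choose (k + f + 2) (f + 2) : ℤ) - (Nat.choose (k + f) (f + 2) : ℤ)) =
      Nat.choose (n + f + 3) (f + 2) + Nat.choose (n + f + 2) (f + 2) := by
  induction n with
  | zero =>
    have h0 : Nat.choose f (f + 2) = 0 := Nat.choose_eq_zero_of_lt (by omega)
    have h1 : Nat.choose (1 + f) (f + 2) = 0 := Nat.choose_eq_zero_of_lt (by omega)
    simp only [Finset.sum_range_succ, Finset.sum_range_zero, zero_add, h0, h1]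
    rw [show 1 + f + 2 = f + 3 by omega]
    push_cast
    ring
  | succ n ih =>
    rw [Finset.sum_range_succ, ih, show n + 2 + f + 2 = n + 1 + f + 3 by omega,
      show n + 2 + f = n + f + 2 by omega, show n + 1 + f + 2 = n + f + 3 by omega]
    ring

/-- The radial factors increase by one when `P` increases by two, for any weights `h`. -/
lemma sum_radial_add_two (h : ℕ → ℤ) (P : ℕ) :
    ∑ k ∈ Finset.range (P + 3), h k * (((P + 2 - k) / 2 : ℕ) + 1) =
      ∑ k ∈ Finset.range (P + 1), h k * (((P - k) / 2 : ℕ) + 1) +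
        ∑ k ∈ Finset.range (P + 3), h k := by
  have key : ∀ k ∈ Finset.range (P + 1), h k * (((P + 2 - k) / 2 : ℕ) + 1) =
      h k * (((P - k) / 2 : ℕ) + 1) + h k := by
    intro k hk
    have hk' := Finset.mem_range.mp hk
    rw [show (P + 2 - k) / 2 = (P - k) / 2 + 1 by omega]
    push_cast
    ring
  rw [Finset.sum_range_succ, Finset.sum_range_succ, Finset.sum_congr rfl key,
    Finset.sum_add_distrib, Finset.sum_range_succ h (P + 2), Finset.sum_range_succ h (P + 1),
    show (P + 2 - (P + 1)) / 2 = 0 by omega, show (P + 2 - (P + 2)) / 2 = 0 by omega]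
  push_cast
  ring

/-- The identity in dimension `d = f + 3`, free of truncated subtraction in the binomials. -/
lemma term_count_aux (f P : ℕ) :
    ∑ k ∈ Finset.range (P + 1),
      ((Nat.choose (k + f + 2) (f + 2) : ℤ) - (Nat.choose (k + f) (f + 2) : ℤ)) *
        (((P - k) / 2 : ℕ) + 1) =
      (Nat.choose (P + f + 3) (f + 3) : ℤ) := by
  induction P using Nat.twoStepInduction with
  | zero => simp [Nat.choose_eq_zero_of_lt (show f < f + 2 by omega)]
  | one =>
    have h := sum_harmonics f 0
    have pascal := Nat.choose_succ_succ (f + 3) (f + 2)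
    simp only [Finset.sum_range_succ, Finset.sum_range_zero, zero_add] at h ⊢
    rw [show 1 + f + 3 = f + 3 + 1 by omega, pascal]
    simp only [Nat.choose_self] at h ⊢
    norm_num at h ⊢
    linarith
  | more P ih _ =>
    rw [sum_radial_add_two
      (fun k => (Nat.choose (k + f + 2) (f + 2) : ℤ) - (Nat.choose (k + f) (f + 2) : ℤ)), ih,
      sum_harmonics f (P + 1), show P + 2 + f + 3 = P + f + 3 + 1 + 1 by omega,
      Nat.choose_succ_succ (P + f + 3 + 1) (f + 2), Nat.choose_succ_succ (P + f + 3) (f + 2),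
      show P + 1 + f + 3 = P + f + 3 + 1 by omega, show P + 1 + f + 2 = P + f + 3 by omega]
    push_cast
    ring

/-- The paper's count of the number of terms in the order-`P` generalized multipole
expansion in dimension `d ≥ 3`:
`∑_{k=0}^{P} (C(k+d−1,k) − C(k+d−3,d−1)) (⌊(P−k)/2⌋ + 1) = C(d+P, P)`. -/
theorem multipole_term_count (d P : ℕ) (hd : 3 ≤ d) :
    ∑ k ∈ Finset.range (P + 1),
      ((Nat.choose (k + d - 1) k : ℤ) - (Nat.choose (k + d - 3) (d - 1) : ℤ)) *
        (((P - k) / 2 : ℕ) + 1) =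
      (Nat.choose (d + P) P : ℤ) := by
  obtain ⟨f, rfl⟩ := Nat.exists_eq_add_of_le' hd
  rw [show f + 3 + P = P + f + 3 by omega,
    Nat.choose_symm_of_eq_add (show P + f + 3 = P + (f + 3) by omega), ← term_count_aux f P]
  refine Finset.sum_congr rfl fun k _ => ?_
  rw [show k + (f + 3) - 1 = k + f + 2 by omega, show k + (f + 3) - 3 = k + f by omega,
    show f + 3 - 1 = f + 2 by omega,
    Nat.choose_symm_of_eq_add (show k + f + 2 = k + (f + 2) by omega)]
end
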